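/- There exist ℤ-linear maps s : ℤ → T and h : T → T ⊗[ℤ] V such that ε ∘ s = id on ℤ, d ∘ h + s ∘ ε = id on T, and h ∘ d = id on T ⊗[ℤ] V. In other words, the augmented complex 0 → T ⊗[ℤ] V → T → ℤ → 0 admits a ℤ-linear contracting homotopy, so it is split exact as a complex of ℤ-modules. -/

import Mathlib

open TensorProduct

/-!
Let `h` be linear with the Fox-Leibniz rule `h (x * y) = x • h y + ε y • h x`. As `d` is
`T`-linear, both `d ∘ h` and `x ↦ x - ε x` obey this rule, so they agree once they agree on the
generators. Hence the Fox derivative with `h (e_{σ i}) = 1 ⊗ e_i` satisfies `d ∘ h = id - ε`.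
Moreover `h (x * y) = x • h y` when `ε y = 0`, and `h 1 = 0`; so `h` sends `x * (e_{σ i} - c i)` to
`x ⊗ e_i`, which says that `h ∘ d = id`.
-/

section FoxDerivative

variable {R V M : Type*} [CommSemiring R] [AddCommMonoid V] [Module R V]
  [AddCommMonoid M] [Module R M] [Module (TensorAlgebra R V) M]
  [IsScalarTower R (TensorAlgebra R V) M]

/-- The algebra homomorphism from the tensor algebra `T` to the endomorphisms of `M × R` sending
`v : V` to the block triangular matrix with diagonal `v`, `ε v` and off-diagonal entry `f v`.
Read in the off-diagonal entry, its multiplicativity is the Leibniz rule of the Fox derivative. -/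
noncomputable def foxRepresentation (ε : TensorAlgebra R V →ₐ[R] R) (f : V →ₗ[R] M) :
    TensorAlgebra R V →ₐ[R] Module.End R (M × R) :=
  TensorAlgebra.lift R <| LinearMap.mk₂ R
    (fun v p ↦ (TensorAlgebra.ι R v • p.1 + p.2 • f v, ε (TensorAlgebra.ι R v) * p.2))
    (by intros; ext <;> simp [add_smul, add_mul, add_add_add_comm])
    (fun r v p ↦ by ext <;> simp [mul_assoc, smul_comm p.2 r])
    (by intros; ext <;> simp [add_smul, mul_add, add_add_add_comm])
    (fun r v p ↦ by ext <;> simp [mul_smul, mul_left_comm, smul_algebra_smul_comm r])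

/-- The Fox derivative along the augmentation `ε` with values `f` on the generators: the linear map
`h` with `h v = f v` and `h (x * y) = x • h y + ε y • h x`, read off as the off-diagonal entry of
`foxRepresentation ε f`. -/
noncomputable def foxDerivative (ε : TensorAlgebra R V →ₐ[R] R) (f : V →ₗ[R] M) :
    TensorAlgebra R V →ₗ[R] M :=
  LinearMap.fst R M R ∘ₗ LinearMap.applyₗ (0, 1) ∘ₗ (foxRepresentation ε f).toLinearMap

variable (ε : TensorAlgebra R V →ₐ[R] R) (f : V →ₗ[R] M)

@[simp]
theorem foxRepresentation_ι_apply (v : V) (p : M × R) :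
    foxRepresentation ε f (TensorAlgebra.ι R v) p =
      (TensorAlgebra.ι R v • p.1 + p.2 • f v, ε (TensorAlgebra.ι R v) * p.2) := by
  simp [foxRepresentation]

theorem foxRepresentation_apply_inl (x : TensorAlgebra R V) (m : M) :
    foxRepresentation ε f x (m, 0) = (x • m, 0) := by
  induction x using TensorAlgebra.induction generalizing m with
  | algebraMap r => simp
  | ι v => simp
  | mul x y hx hy => simp [hx, hy, mul_smul]
  | add x y hx hy => simp [hx, hy, add_smul]

theorem foxRepresentation_apply_snd (x : TensorAlgebra R V) (p : M × R) :
    (foxRepresentation ε f x p).2 = ε x * p.2 := by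
  induction x using TensorAlgebra.induction generalizing p with
  | algebraMap r => simp
  | ι v => simp
  | mul x y hx hy => simp [hx, hy, mul_assoc]
  | add x y hx hy => simp [hx, hy, add_mul]

theorem foxRepresentation_apply_zero_one (x : TensorAlgebra R V) :
    foxRepresentation ε f x (0, 1) = (foxDerivative ε f x, ε x) :=
  Prod.ext rfl (by simp [foxRepresentation_apply_snd])

@[simp]
theorem foxDerivative_ι (v : V) : foxDerivative ε f (TensorAlgebra.ι R v) = f v := by
  simp [foxDerivative]

@[simp]
theorem foxDerivative_algebraMap (r : R) :
    foxDerivative ε f (algebraMap R (TensorAlgebra R V) r) = 0 := by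
  simp [foxDerivative]

theorem foxDerivative_mul (x y : TensorAlgebra R V) :
    foxDerivative ε f (x * y) = x • foxDerivative ε f y + ε y • foxDerivative ε f x := by
  have hsplit : (foxDerivative ε f y, ε y) =
      (foxDerivative ε f y, (0 : R)) + ε y • ((0 : M), (1 : R)) := by simp
  have hxy := foxRepresentation_apply_zero_one ε f (x * y)
  rw [map_mul, Module.End.mul_apply, foxRepresentation_apply_zero_one, hsplit, map_add, map_smul,
    foxRepresentation_apply_inl, foxRepresentation_apply_zero_one] at hxy
  simpa using (congrArg Prod.fst hxy).symm

variable {ε f}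

theorem eq_foxDerivative [IsCancelAdd M] {D : TensorAlgebra R V →ₗ[R] M}
    (hι : ∀ v, D (TensorAlgebra.ι R v) = f v)
    (hmul : ∀ x y, D (x * y) = x • D y + ε y • D x) : D = foxDerivative ε f := by
  have hone : D 1 = 0 := by simpa using hmul 1 1
  ext x
  induction x using TensorAlgebra.induction with
  | algebraMap r =>
    rw [foxDerivative_algebraMap, Algebra.algebraMap_eq_smul_one, map_smul, hone, smul_zero]
  | ι v => rw [hι, foxDerivative_ι]
  | mul x y hx hy => rw [hmul, foxDerivative_mul, hx, hy]
  | add x y hx hy => rw [map_add, map_add, hx, hy]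

variable (ε f) in
theorem restrictScalars_comp_foxDerivative {N : Type*} [AddCommMonoid N] [IsCancelAdd N]
    [Module R N] [Module (TensorAlgebra R V) N] [IsScalarTower R (TensorAlgebra R V) N]
    (g : M →ₗ[TensorAlgebra R V] N) :
    g.restrictScalars R ∘ₗ foxDerivative ε f = foxDerivative ε (g.restrictScalars R ∘ₗ f) :=
  eq_foxDerivative (by simp) fun x y ↦ by
    have hsmul (r : R) (m : M) : g (r • m) = r • g m := (g.restrictScalars R).map_smul r m
    simp [foxDerivative_mul, hsmul]

end FoxDerivative

section AugmentationBoundary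

variable {R V W : Type*} [CommRing R] [AddCommMonoid V] [Module R V] [AddCommMonoid W] [Module R W]
  (ε : TensorAlgebra R V →ₐ[R] R)

/-- The projection `x ↦ x - ε x` of the tensor algebra onto the kernel of the augmentation `ε`. -/
noncomputable def augmentationProjection : TensorAlgebra R V →ₗ[R] TensorAlgebra R V :=
  LinearMap.id - Algebra.linearMap R (TensorAlgebra R V) ∘ₗ ε.toLinearMap

theorem augmentationProjection_apply (x : TensorAlgebra R V) :
    augmentationProjection ε x = x - algebraMap R (TensorAlgebra R V) (ε x) :=
  rfl

theorem augmentationProjection_eq_foxDerivative :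
    augmentationProjection ε =
      foxDerivative ε (augmentationProjection ε ∘ₗ TensorAlgebra.ι R) :=
  eq_foxDerivative (fun _ ↦ rfl) fun x y ↦ by
    simp only [augmentationProjection_apply, map_mul, smul_eq_mul, Algebra.smul_def, mul_sub,
      ← Algebra.commutes (ε y)]
    abel

theorem foxDerivative_mul_augmentationProjection {M : Type*} [AddCommGroup M] [Module R M]
    [Module (TensorAlgebra R V) M] [IsScalarTower R (TensorAlgebra R V) M] (f : V →ₗ[R] M)
    (x y : TensorAlgebra R V) :
    foxDerivative ε f (x * augmentationProjection ε y) = x • foxDerivative ε f y := by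
  simp [augmentationProjection_apply, foxDerivative_mul]

/-- The boundary map `x ⊗ w ↦ x * (j w - ε (j w))` of the augmented complex
`T ⊗ W → T → R` of the tensor algebra `T` of `V`, with generators relabelled along `j : W → V`. -/
noncomputable def augmentationBoundary (j : W →ₗ[R] V) :
    TensorAlgebra R V ⊗[R] W →ₗ[TensorAlgebra R V] TensorAlgebra R V :=
  TensorProduct.AlgebraTensorModule.lift <|
    LinearMap.toSpanSingleton _ _ (augmentationProjection ε ∘ₗ TensorAlgebra.ι R ∘ₗ j)

@[simp]
theorem augmentationBoundary_tmul (j : W →ₗ[R] V) (x : TensorAlgebra R V) (w : W) :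
    augmentationBoundary ε j (x ⊗ₜ w) =
      x * augmentationProjection ε (TensorAlgebra.ι R (j w)) :=
  rfl

/-- The contracting homotopy `T → T ⊗ W` in degree zero: the Fox derivative sending the generator
`σ w` to `1 ⊗ w`. -/
noncomputable def augmentationHomotopy (σ : W ≃ₗ[R] V) :
    TensorAlgebra R V →ₗ[R] TensorAlgebra R V ⊗[R] W :=
  foxDerivative ε (TensorProduct.mk R (TensorAlgebra R V) W 1 ∘ₗ σ.symm.toLinearMap)

theorem augmentationBoundary_comp_augmentationHomotopy (σ : W ≃ₗ[R] V) :
    (augmentationBoundary ε σ.toLinearMap).restrictScalars R ∘ₗ augmentationHomotopy ε σ =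
      augmentationProjection ε := by
  rw [augmentationHomotopy, restrictScalars_comp_foxDerivative,
    augmentationProjection_eq_foxDerivative]
  congr 1
  ext v
  simp

theorem augmentationHomotopy_comp_augmentationBoundary (σ : W ≃ₗ[R] V) :
    augmentationHomotopy ε σ ∘ₗ (augmentationBoundary ε σ.toLinearMap).restrictScalars R =
      LinearMap.id :=
  TensorProduct.ext' fun x w ↦ by
    simp [augmentationHomotopy, foxDerivative_mul_augmentationProjection, smul_tmul']

theorem tensorAlgebra_resolution_contracting_homotopy_general (σ : W ≃ₗ[R] V) :
    ∃ (s : R →ₗ[R] TensorAlgebra R V) (h : TensorAlgebra R V →ₗ[R] TensorAlgebra R V ⊗[R] W),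
      ε.toLinearMap ∘ₗ s = LinearMap.id ∧
      (augmentationBoundary ε σ.toLinearMap).restrictScalars R ∘ₗ h + s ∘ₗ ε.toLinearMap =
        LinearMap.id ∧
      h ∘ₗ (augmentationBoundary ε σ.toLinearMap).restrictScalars R = LinearMap.id := by
  refine ⟨Algebra.linearMap R _, augmentationHomotopy ε σ, ?_, ?_,
    augmentationHomotopy_comp_augmentationBoundary ε σ⟩
  · ext
    simp
  · rw [augmentationBoundary_comp_augmentationHomotopy, augmentationProjection, sub_add_cancel]

end AugmentationBoundary

theorem tensorProduct_finsupp_hom_ext {R M N α : Type*} [CommSemiring R] [AddCommMonoid M]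
    [Module R M] [AddCommMonoid N] [Module R N] {f g : M ⊗[R] (α →₀ R) →ₗ[R] N}
    (h : ∀ x a, f (x ⊗ₜ Finsupp.single a 1) = g (x ⊗ₜ Finsupp.single a 1)) : f = g := by
  ext x a
  exact h x a

theorem eq_augmentationBoundary_domLCongr {R α β : Type*} [CommRing R]
    {ε : TensorAlgebra R (β →₀ R) →ₐ[R] R} (σ : α ≃ β)
    {d : TensorAlgebra R (β →₀ R) ⊗[R] (α →₀ R) →ₗ[R] TensorAlgebra R (β →₀ R)}
    (hd : ∀ x a, d (x ⊗ₜ Finsupp.single a 1) =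
      x * TensorAlgebra.ι R (Finsupp.single (σ a) 1) -
        ε (TensorAlgebra.ι R (Finsupp.single (σ a) 1)) • x) :
    d = (augmentationBoundary ε (Finsupp.domLCongr σ).toLinearMap).restrictScalars R :=
  tensorProduct_finsupp_hom_ext fun x a ↦ by
    rw [hd, LinearMap.restrictScalars_apply, augmentationBoundary_tmul, LinearEquiv.coe_coe,
      Finsupp.domLCongr_single, augmentationProjection_apply, mul_sub, ← Algebra.commutes,
      Algebra.smul_def]

/-- Let `V = ι →₀ ℤ` with basis `(e_i)`, `T = TensorAlgebra ℤ V`, `σ : ι → ι` an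
involution, `c : ι → ℤ` with `c ∘ σ = c`, `ε : T → ℤ` the ℤ-algebra homomorphism with
`ε (e_i) = c i`, and `d : T ⊗[ℤ] V → T` the ℤ-linear map with
`d (x ⊗ e_i) = x * e_{σ i} - c i • x`.  Then the augmented complex
`0 → T ⊗[ℤ] V → T → ℤ → 0` admits a ℤ-linear contracting homotopy: there are ℤ-linear
maps `s : ℤ → T` and `h : T → T ⊗[ℤ] V` with `ε ∘ s = id`, `d ∘ h + s ∘ ε = id` and
`h ∘ d = id`. -/
theorem tensorAlgebra_resolution_contracting_homotopy
    {ι : Type*} (σ : ι → ι) (hσ : σ ∘ σ = id) (c : ι → ℤ) (hc : c ∘ σ = c)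
    (ε : TensorAlgebra ℤ (ι →₀ ℤ) →ₐ[ℤ] ℤ)
    (hε : ∀ i : ι, ε (TensorAlgebra.ι ℤ (Finsupp.single i 1)) = c i)
    (d : TensorAlgebra ℤ (ι →₀ ℤ) ⊗[ℤ] (ι →₀ ℤ) →ₗ[ℤ] TensorAlgebra ℤ (ι →₀ ℤ))
    (hd : ∀ (x : TensorAlgebra ℤ (ι →₀ ℤ)) (i : ι),
      d (x ⊗ₜ[ℤ] Finsupp.single i 1) =
        x * TensorAlgebra.ι ℤ (Finsupp.single (σ i) 1) - c i • x) :
    ∃ (s : ℤ →ₗ[ℤ] TensorAlgebra ℤ (ι →₀ ℤ))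
      (h : TensorAlgebra ℤ (ι →₀ ℤ) →ₗ[ℤ]
        TensorAlgebra ℤ (ι →₀ ℤ) ⊗[ℤ] (ι →₀ ℤ)),
      ε.toLinearMap ∘ₗ s = LinearMap.id ∧
      d ∘ₗ h + s ∘ₗ ε.toLinearMap = LinearMap.id ∧
      h ∘ₗ d = LinearMap.id := by
  have hεσ (i : ι) : ε (TensorAlgebra.ι ℤ (Finsupp.single (σ i) 1)) = c i :=
    (hε (σ i)).trans (congrFun hc i)
  obtain rfl := eq_augmentationBoundary_domLCongr (d := d) (ε := ε)
    (Function.Involutive.toPerm σ (congrFun hσ)) fun x i ↦ (hd x i).trans (by rw [← hεσ]; rfl)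
  exact tensorAlgebra_resolution_contracting_homotopy_general ε _
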